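/- Let θ > 0, ν > 0 and let k ≥ 1 be an integer. With p_i = θ/(θ+i−1), set s_1(k+1,k+j) = (∏_{i=k+1}^{k+j} (1−p_i)) · (∑_{i=k+1}^{k+j} p_i/(1−p_i)) for j ≥ 0. Then the function x ↦ (1−x)^{k+ν} ∑_{j≥0} ((ν+k)_j / j!) x^j s_1(k+1, k+j) is unimodal on [0,1): there exists x* ∈ [0,1) such that the function is nondecreasing on [0, x*] and nonincreasing on [x*, 1). -/

import Mathlib

/-- The rising factorial (Pochhammer symbol): `(y)_j = y(y+1)⋯(y+j-1)`, `(y)_0 = 1`. -/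
noncomputable def risingFactorial (y : ℝ) : ℕ → ℝ
  | 0 => 1
  | m + 1 => risingFactorial y m * (y + m)

/-- `s₁(k+1, k+j)` for the profile `p_i = θ/(θ+i-1)`: probability of exactly
one success among trials `k+1, …, k+j`. -/
noncomputable def s1 (θ : ℝ) (k j : ℕ) : ℝ :=
  (∏ i ∈ Finset.Ico (k + 1) (k + j + 1), (1 - θ / (θ + (i : ℝ) - 1))) *
    (∑ i ∈ Finset.Ico (k + 1) (k + j + 1),
      (θ / (θ + (i : ℝ) - 1)) / (1 - θ / (θ + (i : ℝ) - 1)))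

/-!
Fix `k`, put `a = ν + k`, and let `s n` be the probability of exactly one success in the `n` trials
that follow. Then `W` is the mean of `s` under the negative binomial law with parameters `a`, `x`,
and `W' = a (1 - x)^(a-1) ∑ (a+1)_n / n! (s (n+1) - s n) x^n`. The probabilities `s n` increase
until the cumulated odds `∑ p i / (1 - p i)` reach `1` and decrease from then on, so the
coefficients of this power series change sign once, and `W'` passes from positive to negative at
most once on `(0, 1)`. Since `∑ p i` diverges, `s` tends to `0`, hence `W` tends to `0 = W(0)` as
`x → 1`, and Rolle's theorem shows that `W'` does vanish inside `(0, 1)`.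
-/

open Asymptotics Filter Set Topology

lemma hasDerivAt_tsum_mul_pow {𝕜 : Type*} [NontriviallyNormedField 𝕜] [CompleteSpace 𝕜]
    {c : ℕ → 𝕜} {x : 𝕜} {r : ℝ} (hc : Summable fun n ↦ ‖c n‖ * r ^ n) (hx : ‖x‖ < r) :
    HasDerivAt (fun y ↦ ∑' n, c n * y ^ n) (∑' n, (n + 1) * c (n + 1) * x ^ n) x := by
  lift r to NNReal using (norm_nonneg x).trans hx.le
  set p := FormalMultilinearSeries.ofScalars 𝕜 c
  have hr : ‖x‖ₑ < p.radius :=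
    (enorm_lt_coe.2 hx).trans_le (p.le_radius_of_summable (by simpa [p] using hc))
  have hp : p.sum = fun y ↦ ∑' n, c n * y ^ n := by
    funext y
    simp [p, FormalMultilinearSeries.sum, mul_comm]
  have hderiv : HasSum (fun n ↦ (n + 1) * c (n + 1) * x ^ n) (p.derivSeries.sum x 1) := by
    have := (p.derivSeries.hasSum (x := x)
      (by simpa using hr.trans_le p.radius_le_radius_derivSeries)).mapL
        (ContinuousLinearMap.apply 𝕜 𝕜 (1 : 𝕜))
    simpa [p, FormalMultilinearSeries.apply_eq_pow_smul_coeff, mul_comm] using this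
  rw [hderiv.tsum_eq, ← hp]
  exact (FormalMultilinearSeries.hasFDerivAt_sum hr).hasDerivAt

lemma tsum_mul_pow_nonpos_of_le {c : ℕ → ℝ} {m : ℕ} (hc_nonneg : ∀ n < m, 0 ≤ c n)
    (hc_nonpos : ∀ n, m ≤ n → c n ≤ 0) {x y : ℝ} (hx : 0 < x) (hxy : x ≤ y)
    (hsx : Summable fun n ↦ c n * x ^ n) (hsy : Summable fun n ↦ c n * y ^ n)
    (h : ∑' n, c n * x ^ n ≤ 0) : ∑' n, c n * y ^ n ≤ 0 := by
  have hq : 1 ≤ y / x := (one_le_div hx).2 hxy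
  have hterm (n : ℕ) : c n * y ^ n ≤ (y / x) ^ m * (c n * x ^ n) := by
    have hcq : c n * (y / x) ^ n ≤ c n * (y / x) ^ m := by
      rcases lt_or_ge n m with hn | hn
      · exact mul_le_mul_of_nonneg_left (pow_le_pow_right₀ hq hn.le) (hc_nonneg n hn)
      · exact mul_le_mul_of_nonpos_left (pow_le_pow_right₀ hq hn) (hc_nonpos n hn)
    calc c n * y ^ n = c n * (y / x) ^ n * x ^ n := by
          rw [mul_assoc, ← mul_pow, div_mul_cancel₀ y hx.ne']
      _ ≤ c n * (y / x) ^ m * x ^ n := by gcongr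
      _ = (y / x) ^ m * (c n * x ^ n) := by ring
  calc ∑' n, c n * y ^ n ≤ ∑' n, (y / x) ^ m * (c n * x ^ n) :=
        hsy.tsum_le_tsum hterm (hsx.mul_left _)
    _ = (y / x) ^ m * ∑' n, c n * x ^ n := tsum_mul_left
    _ ≤ 0 := mul_nonpos_of_nonneg_of_nonpos (by positivity) h

lemma tsum_mul_le_of_forall_ge_le {w t : ℕ → ℝ} {W ε : ℝ} {N : ℕ} (hw : ∀ n, 0 ≤ w n)
    (hW : HasSum w W) (hε : 0 ≤ ε) (hwt : Summable fun n ↦ w n * t n) (ht : ∀ n, N ≤ n → t n ≤ ε) :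
    ∑' n, w n * t n ≤ ∑ n ∈ Finset.range N, w n * t n + W * ε := by
  have htail : Summable fun n ↦ w (n + N) := (summable_nat_add_iff N).2 hW.summable
  have htail_le : ∑' n, w (n + N) ≤ W := by
    rw [← hW.tsum_eq, ← hW.summable.sum_add_tsum_nat_add N]
    exact le_add_of_nonneg_left (Finset.sum_nonneg fun n _ ↦ hw n)
  calc ∑' n, w n * t n
      = ∑ n ∈ Finset.range N, w n * t n + ∑' n, w (n + N) * t (n + N) :=
        (hwt.sum_add_tsum_nat_add N).symm
    _ ≤ ∑ n ∈ Finset.range N, w n * t n + ∑' n, w (n + N) * ε := by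
        gcongr with n
        · exact (summable_nat_add_iff N).2 hwt
        · exact htail.mul_right ε
        · exact hw _
        · exact ht _ (Nat.le_add_left N n)
    _ ≤ ∑ n ∈ Finset.range N, w n * t n + W * ε := by
        rw [tsum_mul_right]
        gcongr

lemma tendsto_tsum_mul_of_tendsto {α : Type*} {l : Filter α} {w : α → ℕ → ℝ} {s : ℕ → ℝ} {L : ℝ}
    (hw_nonneg : ∀ᶠ x in l, ∀ n, 0 ≤ w x n) (hw_sum : ∀ᶠ x in l, HasSum (w x) 1)
    (hw_zero : ∀ n, Tendsto (fun x ↦ w x n) l (𝓝 0)) (hs : Tendsto s atTop (𝓝 L)) :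
    Tendsto (fun x ↦ ∑' n, w x n * s n) l (𝓝 L) := by
  rw [Metric.tendsto_nhds]
  intro ε hε
  obtain ⟨N, hN⟩ := eventually_atTop.1 (Metric.tendsto_nhds.1 hs (ε / 2) (half_pos hε))
  obtain ⟨C, hC⟩ := (hs.sub_const L).norm.bddAbove_range
  have hhead : ∀ᶠ x in l, ∑ n ∈ Finset.range N, w x n * |s n - L| < ε / 2 := by
    have : Tendsto (fun x ↦ ∑ n ∈ Finset.range N, w x n * |s n - L|) l (𝓝 0) := by
      simpa using tendsto_finsetSum (Finset.range N) fun n _ ↦ (hw_zero n).mul_const |s n - L|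
    exact this.eventually_lt_const (half_pos hε)
  filter_upwards [hw_nonneg, hw_sum, hhead] with x hx hx1 hxN
  have habs (n : ℕ) : |w x n * (s n - L)| = w x n * |s n - L| := by
    rw [abs_mul, abs_of_nonneg (hx n)]
  have hsum : Summable fun n ↦ w x n * |s n - L| :=
    (hx1.summable.mul_right C).of_nonneg_of_le (fun n ↦ mul_nonneg (hx n) (abs_nonneg _))
      fun n ↦ mul_le_mul_of_nonneg_left (hC ⟨n, rfl⟩) (hx n)
  have hdev : Summable fun n ↦ w x n * (s n - L) := .of_abs (by simpa only [habs] using hsum)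
  have hmean : ∑' n, w x n * s n = ∑' n, w x n * (s n - L) + L := by
    simpa [← mul_add] using ((hdev.hasSum.add (hx1.mul_right L)).tsum_eq)
  calc dist (∑' n, w x n * s n) L = |∑' n, w x n * (s n - L)| := by
        rw [hmean, Real.dist_eq, add_sub_cancel_right]
    _ ≤ ∑' n, w x n * |s n - L| := by
        simpa only [Real.norm_eq_abs, habs] using norm_tsum_le_tsum_norm hdev.norm
    _ ≤ ∑ n ∈ Finset.range N, w x n * |s n - L| + 1 * (ε / 2) :=
        tsum_mul_le_of_forall_ge_le hx hx1 (half_pos hε).le hsum fun n hn ↦ (hN n hn).le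
    _ < ε := by linarith

lemma exists_monotoneOn_antitoneOn_of_deriv {f : ℝ → ℝ} {a b : ℝ} (hf : ContinuousOn f (Ico a b))
    (hf' : DifferentiableOn ℝ f (Ioo a b)) (hex : ∃ x ∈ Ioo a b, deriv f x ≤ 0)
    (hsign : ∀ x ∈ Ioo a b, ∀ y ∈ Ioo a b, x ≤ y → deriv f x ≤ 0 → deriv f y ≤ 0) :
    ∃ c ∈ Ico a b, MonotoneOn f (Icc a c) ∧ AntitoneOn f (Ico c b) := by
  set S : Set ℝ := {x ∈ Ioo a b | deriv f x ≤ 0}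
  obtain ⟨x₀, hx₀, hfx₀⟩ := hex
  have hne : S.Nonempty := ⟨x₀, hx₀, hfx₀⟩
  have hbdd : BddBelow S := ⟨a, fun x hx ↦ hx.1.1.le⟩
  have hac : a ≤ sInf S := le_csInf hne fun x hx ↦ hx.1.1.le
  have hcb : sInf S < b := (csInf_le hbdd ⟨hx₀, hfx₀⟩).trans_lt hx₀.2
  refine ⟨sInf S, ⟨hac, hcb⟩, ?_, ?_⟩
  · refine monotoneOn_of_deriv_nonneg (convex_Icc _ _) (hf.mono (Icc_subset_Ico_right hcb)) ?_ ?_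
      <;> rw [interior_Icc]
    · exact hf'.mono (Ioo_subset_Ioo_right hcb.le)
    · intro x hx
      contrapose! hx
      exact fun hxS ↦ hxS.2.not_ge (csInf_le hbdd ⟨⟨hxS.1, hxS.2.trans hcb⟩, hx.le⟩)
  · refine antitoneOn_of_deriv_nonpos (convex_Ico _ _) (hf.mono (Ico_subset_Ico_left hac)) ?_ ?_
      <;> rw [interior_Ico]
    · exact hf'.mono (Ioo_subset_Ioo_left hac)
    · intro x hx
      obtain ⟨y, ⟨hy, hfy⟩, hyx⟩ := exists_lt_of_csInf_lt hne hx.1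
      exact hsign y hy x ⟨hy.1.trans hyx, hx.2⟩ hyx.le hfy

lemma eq_zero_of_tendsto_of_not_summable {p u : ℕ → ℝ} {L : ℝ} (hp : ¬Summable p)
    (hpu : Summable fun n ↦ p n * u n) (hu : Tendsto u atTop (𝓝 L)) : L = 0 := by
  by_contra hL
  have hLu : (fun _ ↦ L) =O[atTop] u := ((isEquivalent_const_iff_tendsto hL).2 hu).isBigO_symm
  have hpL : Summable fun n ↦ p n * L :=
    summable_of_isBigO_nat' hpu ((isBigO_refl p atTop).mul hLu)
  exact hp ((summable_mul_right_iff hL).1 hpL)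

lemma summable_sub_succ_of_antitone {v : ℕ → ℝ} (hv : Antitone v) (hbdd : BddBelow (range v)) :
    Summable fun n ↦ v n - v (n + 1) := by
  obtain ⟨b, hb⟩ := hbdd
  refine summable_of_sum_range_le (c := v 0 - b) (fun n ↦ sub_nonneg.2 (hv n.le_succ)) fun n ↦ ?_
  rw [Finset.sum_range_sub']
  exact sub_le_sub_left (hb ⟨n, rfl⟩) _

lemma tendsto_zero_of_sub_succ_eq {p u v : ℕ → ℝ} (hp0 : ∀ n, 0 ≤ p n) (hp : ¬Summable p)
    (hu : ∀ n, 0 ≤ u n) (hv : ∀ n, 0 ≤ v n) (huv : ∀ n, v n - v (n + 1) = p n * u n)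
    (hsub : Tendsto (fun n ↦ v n - u n) atTop (𝓝 0)) : Tendsto u atTop (𝓝 0) := by
  have hanti : Antitone v := antitone_nat_of_succ_le fun n ↦
    sub_nonneg.1 ((huv n).symm ▸ mul_nonneg (hp0 n) (hu n))
  have hbdd : BddBelow (range v) := ⟨0, forall_mem_range.2 hv⟩
  have hlim : Tendsto u atTop (𝓝 (⨅ n, v n)) := by
    simpa using (tendsto_atTop_ciInf hanti hbdd).sub hsub
  have hsum : Summable fun n ↦ p n * u n := by
    simpa only [huv] using summable_sub_succ_of_antitone hanti hbdd
  rwa [eq_zero_of_tendsto_of_not_summable hp hsum hlim] at hlim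

lemma multichoose_eq_ascPochhammer_eval_div {𝕜 : Type*} [Field 𝕜] [CharZero 𝕜]
    [BinomialRing 𝕜] (a : 𝕜) (n : ℕ) :
    Ring.multichoose a n = (ascPochhammer 𝕜 n).eval a / n.factorial := by
  rw [eq_div_iff (Nat.cast_ne_zero.2 n.factorial_ne_zero), mul_comm, ← nsmul_eq_mul,
    Ring.factorial_nsmul_multichoose_eq_ascPochhammer, Polynomial.ascPochhammer_smeval_eq_eval]

lemma multichoose_pos {𝕜 : Type*} [Field 𝕜] [LinearOrder 𝕜] [IsStrictOrderedRing 𝕜]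
    [BinomialRing 𝕜] {a : 𝕜} (ha : 0 < a) (n : ℕ) : 0 < Ring.multichoose a n := by
  rw [multichoose_eq_ascPochhammer_eval_div]
  exact div_pos (ascPochhammer_pos n a ha) (by positivity)

lemma succ_mul_multichoose_succ {𝕜 : Type*} [Field 𝕜] [CharZero 𝕜] [BinomialRing 𝕜] (a : 𝕜)
    (n : ℕ) : (n + 1) * Ring.multichoose a (n + 1) = a * Ring.multichoose (a + 1) n := by
  simp only [multichoose_eq_ascPochhammer_eval_div, ascPochhammer_succ_left, Nat.factorial_succ,
    Polynomial.eval_mul, Polynomial.eval_X, Polynomial.eval_comp, Polynomial.eval_add,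
    Polynomial.eval_one, Nat.cast_mul, Nat.cast_succ]
  field_simp

lemma hasSum_multichoose_mul_pow (a : ℝ) {x : ℝ} (hx : |x| < 1) :
    HasSum (fun n ↦ Ring.multichoose a n * x ^ n) (1 / (1 - x) ^ a) := by
  have := (Real.one_div_one_sub_rpow_hasFPowerSeriesOnBall_zero a).hasSum (y := x)
    (by simpa [← ofReal_norm] using hx)
  simpa [Ring.multichoose_eq, mul_comm] using this

/-- The power series `∑ (a)_n / n! * s n * x ^ n` with negative binomial weights;
`Ring.multichoose a n` is `(a)_n / n!`. -/
noncomputable def negBinomialSeries (a : ℝ) (s : ℕ → ℝ) (x : ℝ) : ℝ :=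
  ∑' n, Ring.multichoose a n * s n * x ^ n

/-- The mean of `s` under the negative binomial distribution, which for `0 < a` and `0 ≤ x < 1`
gives mass `(1 - x) ^ a * (a)_n / n! * x ^ n` to `n`. -/
noncomputable def negBinomialMean (a : ℝ) (s : ℕ → ℝ) (x : ℝ) : ℝ :=
  (1 - x) ^ a * negBinomialSeries a s x

section negBinomialMean

variable {a x y C : ℝ} {s : ℕ → ℝ}

lemma summable_norm_negBinomialSeries (a : ℝ) (hs : ∀ n, |s n| ≤ C) (hx : |x| < 1) :
    Summable fun n ↦ ‖Ring.multichoose a n * s n * x ^ n‖ := by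
  refine ((hasSum_multichoose_mul_pow a hx).summable.norm.mul_right C).of_nonneg_of_le
    (fun n ↦ norm_nonneg _) fun n ↦ ?_
  rw [mul_right_comm, norm_mul]
  gcongr
  exact hs n

lemma summable_negBinomialSeries (a : ℝ) (hs : ∀ n, |s n| ≤ C) (hx : |x| < 1) :
    Summable fun n ↦ Ring.multichoose a n * s n * x ^ n :=
  (summable_norm_negBinomialSeries a hs hx).of_norm

lemma negBinomialSeries_nonpos_of_le (ha : 0 < a) (hs : ∀ n, |s n| ≤ C) {m : ℕ}
    (hs_nonneg : ∀ n < m, 0 ≤ s n) (hs_nonpos : ∀ n, m ≤ n → s n ≤ 0) (hx : 0 < x) (hxy : x ≤ y)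
    (hy : y < 1) (h : negBinomialSeries a s x ≤ 0) : negBinomialSeries a s y ≤ 0 :=
  tsum_mul_pow_nonpos_of_le (fun n hn ↦ mul_nonneg (multichoose_pos ha n).le (hs_nonneg n hn))
    (fun n hn ↦ mul_nonpos_of_nonneg_of_nonpos (multichoose_pos ha n).le (hs_nonpos n hn)) hx hxy
    (summable_negBinomialSeries a hs (abs_lt.2 ⟨by linarith, hxy.trans_lt hy⟩))
    (summable_negBinomialSeries a hs (abs_lt.2 ⟨by linarith, hy⟩)) h

lemma hasDerivAt_negBinomialSeries (a : ℝ) (hs : ∀ n, |s n| ≤ C) (hx : |x| < 1) :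
    HasDerivAt (negBinomialSeries a s)
      (a * negBinomialSeries (a + 1) (fun n ↦ s (n + 1)) x) x := by
  obtain ⟨r, hxr, hr⟩ := exists_between hx
  have hr0 : |r| = r := abs_of_nonneg ((abs_nonneg x).trans hxr.le)
  have hsum : Summable fun n ↦ ‖Ring.multichoose a n * s n‖ * r ^ n := by
    simpa only [norm_mul _ (r ^ _), norm_pow, Real.norm_eq_abs r, hr0] using
      summable_norm_negBinomialSeries a hs (hr0.trans_lt hr)
  have hvalue : a * negBinomialSeries (a + 1) (fun n ↦ s (n + 1)) x =
      ∑' n : ℕ, (n + 1) * (Ring.multichoose a (n + 1) * s (n + 1)) * x ^ n := by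
    simp only [negBinomialSeries, ← tsum_mul_left, ← mul_assoc, succ_mul_multichoose_succ]
  rw [hvalue]
  exact hasDerivAt_tsum_mul_pow hsum hxr

lemma negBinomialSeries_eq_sub (a : ℝ) (hs : ∀ n, |s n| ≤ C) (hx : |x| < 1) :
    negBinomialSeries a s x =
      negBinomialSeries (a + 1) s x - x * negBinomialSeries (a + 1) (fun n ↦ s (n + 1)) x := by
  have ha := summable_negBinomialSeries a hs hx
  have hs₁ := summable_negBinomialSeries (a + 1) hs hx
  have hs₂ := summable_negBinomialSeries (a + 1) (fun n ↦ hs (n + 1)) hx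
  rw [negBinomialSeries, negBinomialSeries, negBinomialSeries, ha.tsum_eq_zero_add,
    hs₁.tsum_eq_zero_add, ← tsum_mul_left, add_sub_assoc,
    ← ((summable_nat_add_iff 1).2 hs₁).tsum_sub (hs₂.mul_left x),
    Ring.multichoose_zero_right, Ring.multichoose_zero_right]
  congr with n
  rw [Ring.multichoose_succ_succ]
  ring

lemma negBinomialSeries_sub (a : ℝ) (hs : ∀ n, |s n| ≤ C) (hx : |x| < 1) :
    negBinomialSeries a (fun n ↦ s (n + 1) - s n) x =
      negBinomialSeries a (fun n ↦ s (n + 1)) x - negBinomialSeries a s x := by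
  rw [negBinomialSeries, negBinomialSeries, negBinomialSeries,
    ← (summable_negBinomialSeries a (fun n ↦ hs (n + 1)) hx).tsum_sub
      (summable_negBinomialSeries a hs hx)]
  congr with n
  ring

lemma hasDerivAt_negBinomialMean (a : ℝ) (hs : ∀ n, |s n| ≤ C) (hx : |x| < 1) :
    HasDerivAt (negBinomialMean a s)
      (a * (1 - x) ^ (a - 1) * negBinomialSeries (a + 1) (fun n ↦ s (n + 1) - s n) x) x := by
  have hx1 : 0 < 1 - x := sub_pos.2 (abs_lt.1 hx).2
  have hpow : HasDerivAt (fun y : ℝ ↦ (1 - y) ^ a) (-1 * a * (1 - x) ^ (a - 1)) x :=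
    ((hasDerivAt_id x).const_sub 1).rpow_const (Or.inl hx1.ne')
  refine (hpow.mul (hasDerivAt_negBinomialSeries a hs hx)).congr_deriv ?_
  have hsplit : (1 - x) ^ a = (1 - x) ^ (a - 1) * (1 - x) := by
    rw [← Real.rpow_add_one hx1.ne', sub_add_cancel]
  rw [negBinomialSeries_sub _ hs hx, negBinomialSeries_eq_sub a hs hx, hsplit]
  ring

lemma deriv_negBinomialMean_nonpos_iff (ha : 0 < a) (hs : ∀ n, |s n| ≤ C) (hx : |x| < 1) :
    deriv (negBinomialMean a s) x ≤ 0 ↔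
      negBinomialSeries (a + 1) (fun n ↦ s (n + 1) - s n) x ≤ 0 := by
  have hpos : 0 < a * (1 - x) ^ (a - 1) :=
    mul_pos ha (Real.rpow_pos_of_pos (sub_pos.2 (abs_lt.1 hx).2) _)
  rw [(hasDerivAt_negBinomialMean a hs hx).deriv, ← smul_eq_mul,
    smul_nonpos_iff_nonpos_of_pos_left hpos]

lemma negBinomialMean_zero (a : ℝ) (s : ℕ → ℝ) : negBinomialMean a s 0 = s 0 := by
  rw [negBinomialMean, negBinomialSeries, tsum_eq_single 0 fun n hn ↦ by simp [hn]]
  simp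

lemma tendsto_negBinomialMean_one (ha : 0 < a) {L : ℝ} (hs : Tendsto s atTop (𝓝 L)) :
    Tendsto (negBinomialMean a s) (𝓝[<] 1) (𝓝 L) := by
  have hmem : ∀ᶠ x : ℝ in 𝓝[<] 1, x ∈ Ioo (0 : ℝ) 1 := Ioo_mem_nhdsLT one_pos
  have hweight_nonneg : ∀ᶠ x : ℝ in 𝓝[<] 1, ∀ n,
      0 ≤ (1 - x) ^ a * (Ring.multichoose a n * x ^ n) := by
    filter_upwards [hmem] with x hx n
    have := multichoose_pos ha n
    have := hx.1
    have := Real.rpow_pos_of_pos (sub_pos.2 hx.2) a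
    positivity
  have hweight_sum : ∀ᶠ x : ℝ in 𝓝[<] 1,
      HasSum (fun n ↦ (1 - x) ^ a * (Ring.multichoose a n * x ^ n)) 1 := by
    filter_upwards [hmem] with x hx
    have hpos := Real.rpow_pos_of_pos (sub_pos.2 hx.2) a
    simpa [hpos.ne'] using
      (hasSum_multichoose_mul_pow a (abs_lt.2 ⟨by linarith [hx.1], hx.2⟩)).mul_left ((1 - x) ^ a)
  have hweight_zero (n : ℕ) :
      Tendsto (fun x : ℝ ↦ (1 - x) ^ a * (Ring.multichoose a n * x ^ n)) (𝓝[<] 1) (𝓝 0) := by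
    have hcont : Continuous fun x : ℝ ↦ (1 - x) ^ a * (Ring.multichoose a n * x ^ n) := by
      fun_prop (disch := exact ha.le)
    simpa [ha.ne'] using (hcont.tendsto 1).mono_left nhdsWithin_le_nhds
  refine (tendsto_tsum_mul_of_tendsto hweight_nonneg hweight_sum hweight_zero hs).congr fun x ↦ ?_
  rw [negBinomialMean, negBinomialSeries, ← tsum_mul_left]
  congr with n
  ring

theorem exists_monotoneOn_antitoneOn_negBinomialMean (ha : 0 < a) {m : ℕ}
    (hmono : MonotoneOn s (Iic m)) (hanti : AntitoneOn s (Ici m))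
    (hs : Tendsto s atTop (𝓝 (s 0))) :
    ∃ c ∈ Ico (0 : ℝ) 1, MonotoneOn (negBinomialMean a s) (Icc 0 c) ∧
      AntitoneOn (negBinomialMean a s) (Ico c 1) := by
  obtain ⟨C, hC⟩ : ∃ C, ∀ n, |s n| ≤ C := by
    obtain ⟨C, hC⟩ := hs.abs.bddAbove_range
    exact ⟨C, fun n ↦ hC ⟨n, rfl⟩⟩
  have habs {x : ℝ} (hx : x ∈ Ico (0 : ℝ) 1) : |x| < 1 := by rw [abs_of_nonneg hx.1]; exact hx.2
  have hderiv {x : ℝ} (hx : x ∈ Ico (0 : ℝ) 1) := hasDerivAt_negBinomialMean a hC (habs hx)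
  have hcont : ContinuousOn (negBinomialMean a s) (Ico 0 1) := fun x hx ↦
    (hderiv hx).continuousAt.continuousWithinAt
  refine exists_monotoneOn_antitoneOn_of_deriv hcont
    (fun x hx ↦ (hderiv (Ioo_subset_Ico_self hx)).differentiableAt.differentiableWithinAt) ?_ ?_
  · have hzero : Tendsto (negBinomialMean a s) (𝓝[>] 0) (𝓝 (s 0)) := by
      rw [← negBinomialMean_zero a s]
      exact ((hderiv ⟨le_rfl, one_pos⟩).continuousAt.tendsto).mono_left nhdsWithin_le_nhds
    obtain ⟨x, hx, hx'⟩ := exists_deriv_eq_zero' one_pos hzero (tendsto_negBinomialMean_one ha hs)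
    exact ⟨x, hx, hx'.le⟩
  · intro x hx y hy hxy
    rw [deriv_negBinomialMean_nonpos_iff ha hC (habs (Ioo_subset_Ico_self hx)),
      deriv_negBinomialMean_nonpos_iff ha hC (habs (Ioo_subset_Ico_self hy))]
    exact negBinomialSeries_nonpos_of_le (by linarith)
      (fun n ↦ (abs_sub _ _).trans (add_le_add (hC (n + 1)) (hC n)))
      (fun n hn ↦ sub_nonneg.2 (hmono hn.le (Nat.succ_le_of_lt hn) n.le_succ))
      (fun n hn ↦ sub_nonpos.2 (hanti hn (hn.trans n.le_succ) n.le_succ)) hx.1 hxy hy.2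

end negBinomialMean

/-- The probability of no success in the first `n` of a sequence of independent trials, the `i`-th
of which succeeds with probability `p i`. -/
noncomputable def noSuccessProb (p : ℕ → ℝ) (n : ℕ) : ℝ :=
  ∏ i ∈ Finset.range n, (1 - p i)

/-- The probability of exactly one success in the first `n` trials, for `p i ≠ 1`: conditioning on
its position `i` replaces the factor `1 - p i` of `noSuccessProb p n` by `p i`. -/
noncomputable def oneSuccessProb (p : ℕ → ℝ) (n : ℕ) : ℝ :=
  noSuccessProb p n * ∑ i ∈ Finset.range n, p i / (1 - p i)

section oneSuccessProb

variable {p : ℕ → ℝ}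

lemma noSuccessProb_pos (hp1 : ∀ i, p i < 1) (n : ℕ) : 0 < noSuccessProb p n :=
  Finset.prod_pos fun i _ ↦ sub_pos.2 (hp1 i)

lemma oneSuccessProb_nonneg (hp0 : ∀ i, 0 ≤ p i) (hp1 : ∀ i, p i < 1) (n : ℕ) :
    0 ≤ oneSuccessProb p n :=
  mul_nonneg (noSuccessProb_pos hp1 n).le
    (Finset.sum_nonneg fun i _ ↦ div_nonneg (hp0 i) (sub_pos.2 (hp1 i)).le)

lemma noSuccessProb_sub_succ (p : ℕ → ℝ) (n : ℕ) :
    noSuccessProb p n - noSuccessProb p (n + 1) = p n * noSuccessProb p n := by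
  rw [noSuccessProb, noSuccessProb, Finset.prod_range_succ]
  ring

lemma oneSuccessProb_succ {n : ℕ} (hn : p n ≠ 1) :
    oneSuccessProb p (n + 1) = (1 - p n) * oneSuccessProb p n + p n * noSuccessProb p n := by
  have h : 1 - p n ≠ 0 := sub_ne_zero.2 hn.symm
  rw [oneSuccessProb, oneSuccessProb, noSuccessProb, noSuccessProb, Finset.prod_range_succ,
    Finset.sum_range_succ]
  field_simp

lemma oneSuccessProb_succ_sub {n : ℕ} (hn : p n ≠ 1) :
    oneSuccessProb p (n + 1) - oneSuccessProb p n =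
      p n * noSuccessProb p n * (1 - ∑ i ∈ Finset.range n, p i / (1 - p i)) := by
  rw [oneSuccessProb_succ hn, oneSuccessProb]
  ring

lemma tendsto_noSuccessProb (hp0 : ∀ i, 0 ≤ p i) (hp1 : ∀ i, p i < 1) (hp : ¬Summable p) :
    Tendsto (noSuccessProb p) atTop (𝓝 0) :=
  tendsto_zero_of_sub_succ_eq hp0 hp (fun n ↦ (noSuccessProb_pos hp1 n).le)
    (fun n ↦ (noSuccessProb_pos hp1 n).le) (noSuccessProb_sub_succ p) (by simp)

lemma tendsto_oneSuccessProb (hp0 : ∀ i, 0 ≤ p i) (hp1 : ∀ i, p i < 1) (hp : ¬Summable p) :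
    Tendsto (oneSuccessProb p) atTop (𝓝 0) := by
  refine tendsto_zero_of_sub_succ_eq (v := noSuccessProb p + oneSuccessProb p) hp0 hp
    (oneSuccessProb_nonneg hp0 hp1)
    (fun n ↦ add_nonneg (noSuccessProb_pos hp1 n).le (oneSuccessProb_nonneg hp0 hp1 n))
    (fun n ↦ ?_) (by simpa using tendsto_noSuccessProb hp0 hp1 hp)
  -- Trial `n` ends a run with at most one success iff it is the second success.
  have := noSuccessProb_sub_succ p n
  rw [Pi.add_apply, Pi.add_apply, oneSuccessProb_succ (hp1 n).ne]
  linarith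

lemma exists_monotoneOn_antitoneOn_oneSuccessProb (hp0 : ∀ i, 0 ≤ p i) (hp1 : ∀ i, p i < 1)
    (hp : ¬Summable p) :
    ∃ m, MonotoneOn (oneSuccessProb p) (Iic m) ∧ AntitoneOn (oneSuccessProb p) (Ici m) := by
  set R : ℕ → ℝ := fun n ↦ ∑ i ∈ Finset.range n, p i / (1 - p i)
  have hodds (i : ℕ) : p i ≤ p i / (1 - p i) :=
    le_div_self (hp0 i) (sub_pos.2 (hp1 i)) (sub_le_self 1 (hp0 i))
  have hR_mono : Monotone R := monotone_nat_of_le_succ fun n ↦ by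
    simpa [R, Finset.sum_range_succ] using (hp0 n).trans (hodds n)
  have hR_top : Tendsto R atTop atTop :=
    (not_summable_iff_tendsto_nat_atTop_of_nonneg fun i ↦ (hp0 i).trans (hodds i)).1
      fun h ↦ hp (h.of_nonneg_of_le hp0 hodds)
  have hsub (n : ℕ) : oneSuccessProb p (n + 1) - oneSuccessProb p n =
      p n * noSuccessProb p n * (1 - R n) := oneSuccessProb_succ_sub (hp1 n).ne
  have hfactor (n : ℕ) : 0 ≤ p n * noSuccessProb p n :=
    mul_nonneg (hp0 n) (noSuccessProb_pos hp1 n).le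
  have hex : ∃ n, 1 ≤ R n := (hR_top.eventually_ge_atTop 1).exists
  classical
  refine ⟨Nat.find hex, monotoneOn_of_le_add_one ordConnected_Iic fun n _ _ hn ↦ ?_,
    antitoneOn_of_add_one_le ordConnected_Ici fun n _ hn _ ↦ ?_⟩
  · have hRn : R n < 1 := not_le.1 (Nat.find_min hex hn)
    exact sub_nonneg.1 (hsub n ▸ mul_nonneg (hfactor n) (sub_nonneg.2 hRn.le))
  · have hRn : 1 ≤ R n := (Nat.find_spec hex).trans (hR_mono hn)
    exact sub_nonpos.1 (hsub n ▸ mul_nonpos_of_nonneg_of_nonpos (hfactor n) (sub_nonpos.2 hRn))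

end oneSuccessProb

theorem stmt8_general {p : ℕ → ℝ} (hp0 : ∀ i, 0 ≤ p i) (hp1 : ∀ i, p i < 1) (hp : ¬Summable p)
    {a : ℝ} (ha : 0 < a) :
    ∃ xstar ∈ Ico (0 : ℝ) 1, MonotoneOn (negBinomialMean a (oneSuccessProb p)) (Icc 0 xstar) ∧
      AntitoneOn (negBinomialMean a (oneSuccessProb p)) (Ico xstar 1) := by
  obtain ⟨m, hmono, hanti⟩ := exists_monotoneOn_antitoneOn_oneSuccessProb hp0 hp1 hp
  have hlim : Tendsto (oneSuccessProb p) atTop (𝓝 (oneSuccessProb p 0)) := by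
    simpa [oneSuccessProb] using tendsto_oneSuccessProb hp0 hp1 hp
  exact exists_monotoneOn_antitoneOn_negBinomialMean ha hmono hanti hlim

/-- The success probabilities `p_{k+1}, p_{k+2}, …` for `p_i = θ / (θ + i - 1)`, indexed from `0`:
`tailProfile θ k i` is `p_{k+1+i}`. -/
noncomputable def tailProfile (θ : ℝ) (k i : ℕ) : ℝ :=
  θ / (θ + (k + i))

lemma tailProfile_nonneg {θ : ℝ} (hθ : 0 ≤ θ) (k i : ℕ) : 0 ≤ tailProfile θ k i := by
  rw [tailProfile]
  positivity

lemma tailProfile_lt_one {θ : ℝ} (hθ : 0 ≤ θ) {k : ℕ} (hk : 1 ≤ k) (i : ℕ) :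
    tailProfile θ k i < 1 := by
  have hki : (0 : ℝ) < k + i := by positivity
  rw [tailProfile, div_lt_one (by positivity)]
  exact lt_add_of_pos_right θ hki

lemma not_summable_tailProfile {θ : ℝ} (hθ : 0 < θ) (k : ℕ) : ¬Summable (tailProfile θ k) := by
  have hharmonic : ¬Summable fun i : ℕ ↦ 1 / |(i : ℝ) + (θ + k)| ^ (1 : ℝ) := by
    rw [Real.summable_one_div_nat_add_rpow]
    exact lt_irrefl 1
  have hprofile : tailProfile θ k = fun i : ℕ ↦ θ * (1 / |(i : ℝ) + (θ + k)| ^ (1 : ℝ)) := by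
    funext i
    rw [Real.rpow_one, abs_of_nonneg (by positivity), mul_one_div, tailProfile]
    congr 1
    ring
  rwa [hprofile, summable_mul_left_iff hθ.ne']

lemma s1_eq_oneSuccessProb (θ : ℝ) (k n : ℕ) : s1 θ k n = oneSuccessProb (tailProfile θ k) n := by
  have hlen : k + n + 1 - (k + 1) = n := by omega
  have hprofile (i : ℕ) : θ / (θ + ((k + 1 + i : ℕ) : ℝ) - 1) = tailProfile θ k i := by
    rw [tailProfile]
    push_cast
    congr 1
    ring
  simp only [s1, oneSuccessProb, noSuccessProb, Finset.prod_Ico_eq_prod_range,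
    Finset.sum_Ico_eq_sum_range, hlen, hprofile]

lemma risingFactorial_div_factorial (a : ℝ) (n : ℕ) :
    risingFactorial a n / n.factorial = Ring.multichoose a n := by
  have h : risingFactorial a n = (ascPochhammer ℝ n).eval a := by
    induction n with
    | zero => simp [risingFactorial]
    | succ n ih => rw [risingFactorial, ih, ascPochhammer_succ_eval]
  rw [h, multichoose_eq_ascPochhammer_eval_div]

lemma negBinomialMean_tailProfile (θ ν : ℝ) (k : ℕ) :
    negBinomialMean (ν + k) (oneSuccessProb (tailProfile θ k)) = fun x : ℝ ↦
      (1 - x) ^ ((k : ℝ) + ν) *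
        ∑' j : ℕ, risingFactorial (ν + k) j / (Nat.factorial j : ℝ) * x ^ j * s1 θ k j := by
  funext x
  simp only [negBinomialMean, negBinomialSeries, risingFactorial_div_factorial,
    s1_eq_oneSuccessProb, mul_right_comm _ (x ^ _), add_comm (k : ℝ) ν]

/-- `W₁(x,k) = (1-x)^{k+ν} ∑_{j≥0} ((ν+k)_j/j!) xʲ s₁(k+1,k+j)` is unimodal
on `[0,1)`. -/
theorem stmt8 (θ ν : ℝ) (hθ : 0 < θ) (hν : 0 < ν) (k : ℕ) (hk : 1 ≤ k) :
    ∃ xstar ∈ Set.Ico (0 : ℝ) 1,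
      MonotoneOn
        (fun x : ℝ => (1 - x) ^ ((k : ℝ) + ν) *
          ∑' j : ℕ, risingFactorial (ν + k) j / (Nat.factorial j : ℝ) * x ^ j *
            s1 θ k j)
        (Set.Icc 0 xstar) ∧
      AntitoneOn
        (fun x : ℝ => (1 - x) ^ ((k : ℝ) + ν) *
          ∑' j : ℕ, risingFactorial (ν + k) j / (Nat.factorial j : ℝ) * x ^ j *
            s1 θ k j)
        (Set.Ico xstar 1) := by
  rw [← negBinomialMean_tailProfile]
  exact stmt8_general (tailProfile_nonneg hθ.le k) (tailProfile_lt_one hθ.le hk)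
    (not_summable_tailProfile hθ k) (add_pos_of_pos_of_nonneg hν k.cast_nonneg)
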